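/- arXiv:1710.10603 — 5 statements merged into one kernel-verified Lean document; each statement's English description precedes it below -/
import Mathlib

section
/- Let k ≥ 0 be an integer, let Φ be a measurable function on ℝ^n, and let A(y) = (a_{ij}(y)) be a measurable n×n-matrix-valued function with A(y) invertible for a.e. y in the support of Φ, satisfying ∫_{ℝ^n} |det A(y)|^{-1} (1 + ‖A(y)‖^k) |Φ(y)| dy < ∞. Then for every f ∈ W^{k,1}(ℝ^n) and every multi-index α = (α_1, …, α_n) with |α| ≤ k, the weak derivative of H_{Φ,A} f of order α is given for a.e. x by D^α(H_{Φ,A} f)(x) = ∫_{ℝ^n} Φ(y) · [∏_{j=1}^n (Σ_{i=1}^n a_{ij}(y) ∂/∂x_i)^{α_j}](f)(A(y)x) dy, i.e. for every test function φ ∈ C_c^∞(ℝ^n), ∫ H_{Φ,A} f(x) D^α φ(x) dx = (−1)^{|α|} ∫ [∫ Φ(y) (∏_{j=1}^n (Σ_{i=1}^n a_{ij}(y) ∂/∂x_i)^{α_j})(f)(A(y)x) dy] φ(x) dx. -/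
open MeasureTheory

noncomputable section

/-- Action of an `n × n` matrix on a vector of `ℝⁿ` (Euclidean space). -/
def matVec {n : ℕ} (M : Matrix (Fin n) (Fin n) ℝ) (x : EuclideanSpace ℝ (Fin n)) :
    EuclideanSpace ℝ (Fin n) :=
  (WithLp.equiv 2 (Fin n → ℝ)).symm (M.mulVec (WithLp.equiv 2 (Fin n → ℝ) x))

/-- Hilbert–Schmidt (Frobenius) norm of a matrix. -/
def frobNorm {n : ℕ} (M : Matrix (Fin n) (Fin n) ℝ) : ℝ :=
  Real.sqrt (∑ i, ∑ j, (M i j) ^ 2)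

/-- Classical partial derivative `∂/∂xᵢ`. -/
def pderiv1 {n : ℕ} (i : Fin n) (f : EuclideanSpace ℝ (Fin n) → ℝ) :
    EuclideanSpace ℝ (Fin n) → ℝ :=
  fun x => fderiv ℝ f x (EuclideanSpace.single i 1)

/-- Classical multi-index derivative `D^α = ∂^{α₁}_{x₁} ⋯ ∂^{αₙ}_{xₙ}`. -/
def mderiv {n : ℕ} (α : Fin n → ℕ) (f : EuclideanSpace ℝ (Fin n) → ℝ) :
    EuclideanSpace ℝ (Fin n) → ℝ :=
  (List.finRange n).foldr (fun i g => (pderiv1 i)^[α i] g) f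

/-- `g` is the weak derivative of order `α` of `f`:
`∫ f · D^α φ = (−1)^{|α|} ∫ g · φ` for all test functions `φ ∈ C_c^∞`. -/
def IsWeakDeriv {n : ℕ} (α : Fin n → ℕ) (f g : EuclideanSpace ℝ (Fin n) → ℝ) : Prop :=
  ∀ φ : EuclideanSpace ℝ (Fin n) → ℝ, ContDiff ℝ (⊤ : ℕ∞) φ → HasCompactSupport φ →
    ∫ x, f x * mderiv α φ x = (-1 : ℝ) ^ (∑ i, α i) * ∫ x, g x * φ x

/-- `D` is a family of integrable weak derivatives of `f` for all multi-indices `|α| ≤ k`;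
this expresses `f ∈ W^{k,1}(ℝⁿ)` together with a choice of its weak derivatives. -/
def HasSobolevDerivs {n : ℕ} (k : ℕ) (f : EuclideanSpace ℝ (Fin n) → ℝ)
    (D : (Fin n → ℕ) → EuclideanSpace ℝ (Fin n) → ℝ) : Prop :=
  D 0 = f ∧ ∀ α : Fin n → ℕ, (∑ i, α i) ≤ k → Integrable (D α) ∧ IsWeakDeriv α f (D α)

/-- The Sobolev norm `‖f‖_{W^{k,1}} = Σ_{|α| ≤ k} ‖D^α f‖_{L¹}`, computed from a family `D`
of weak derivatives. -/
def sobolevNorm {n : ℕ} (k : ℕ) (D : (Fin n → ℕ) → EuclideanSpace ℝ (Fin n) → ℝ) : ℝ :=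
  ∑ α ∈ (Fintype.piFinset fun _ : Fin n => Finset.range (k + 1)).filter
      (fun α => ∑ i, α i ≤ k), ∫ x, |D α x|

/-- The generalized Hausdorff operator `H_{Φ,A} f (x) = ∫ Φ(y) f(A(y)x) dy`. -/
def hausdorffOp {n : ℕ} (Φ : EuclideanSpace ℝ (Fin n) → ℝ)
    (A : EuclideanSpace ℝ (Fin n) → Matrix (Fin n) (Fin n) ℝ)
    (f : EuclideanSpace ℝ (Fin n) → ℝ) : EuclideanSpace ℝ (Fin n) → ℝ :=
  fun x => ∫ y, Φ y * f (matVec (A y) x)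

/-- The differential operator `[∏_{j=1}^n (Σ_{i=1}^n a_{ij} ∂/∂xᵢ)^{α_j}]` applied to a function
with weak-derivative family `D`, expanded by multilinearity: a sum over all choices `c` picking,
for each factor slot, an index `i`, of the product of the corresponding matrix entries times the
weak derivative of the resulting total order. -/
def dirOp {n : ℕ} (M : Matrix (Fin n) (Fin n) ℝ) (α : Fin n → ℕ)
    (D : (Fin n → ℕ) → EuclideanSpace ℝ (Fin n) → ℝ) :
    EuclideanSpace ℝ (Fin n) → ℝ :=
  fun x => ∑ c : (j : Fin n) → Fin (α j) → Fin n,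
    (∏ j, ∏ s, M (c j s) j) *
      D (fun i => ∑ j, (Finset.univ.filter (fun s => c j s = i)).card) x

abbrev hE (n : ℕ) := EuclideanSpace ℝ (Fin n)

lemma contDiff_pderiv1 {n : ℕ} (i : Fin n) {f : hE n → ℝ} (hf : ContDiff ℝ (⊤ : ℕ∞) f) :
    ContDiff ℝ (⊤ : ℕ∞) (pderiv1 i f) := by
  have h : ContDiff ℝ (⊤ : ℕ∞) (fderiv ℝ f) := hf.fderiv_right (by norm_cast)
  exact h.clm_apply contDiff_const

lemma pderiv1_comm {n : ℕ} (i j : Fin n) {f : hE n → ℝ} (hf : ContDiff ℝ (⊤ : ℕ∞) f) :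
    pderiv1 i (pderiv1 j f) = pderiv1 j (pderiv1 i f) := by
  have h : ContDiff ℝ (⊤ : ℕ∞) (fderiv ℝ f) := hf.fderiv_right (by norm_cast)
  have hd : Differentiable ℝ (fderiv ℝ f) := h.differentiable (by simp)
  funext x
  have hs : IsSymmSndFDerivAt ℝ f x := hf.contDiffAt.isSymmSndFDerivAt (by
    simp only [minSmoothness_of_isRCLikeNormedField]
    exact WithTop.coe_le_coe.2 (le_top : (2 : ℕ∞) ≤ ⊤))
  unfold pderiv1
  have e : ∀ v w : hE n, fderiv ℝ (fun x => fderiv ℝ f x v) x w = fderiv ℝ (fderiv ℝ f) x w v := by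
    intro v w
    rw [fderiv_clm_apply (hd x) (differentiableAt_const v)]
    simp
  rw [e, e]
  exact hs _ _

/-- iterated partial derivatives along a list -/
def dlist {n : ℕ} (l : List (Fin n)) (f : hE n → ℝ) : hE n → ℝ :=
  l.foldr (fun i g => pderiv1 i g) f

lemma contDiff_dlist {n : ℕ} (l : List (Fin n)) {f : hE n → ℝ} (hf : ContDiff ℝ (⊤ : ℕ∞) f) :
    ContDiff ℝ (⊤ : ℕ∞) (dlist l f) := by
  induction l with
  | nil => exact hf
  | cons a l ih => exact contDiff_pderiv1 a ih

lemma dlist_perm {n : ℕ} {l l' : List (Fin n)} (h : l.Perm l') {f : hE n → ℝ}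
    (hf : ContDiff ℝ (⊤ : ℕ∞) f) : dlist l f = dlist l' f := by
  induction h with
  | nil => rfl
  | cons x _ ih => exact congrArg (pderiv1 x) ih
  | swap x y l => exact pderiv1_comm y x (contDiff_dlist l hf)
  | trans _ _ h1 h2 => exact h1.trans h2

lemma dlist_replicate_append {n : ℕ} (i : Fin n) (m : ℕ) (l : List (Fin n)) (f : hE n → ℝ) :
    dlist (List.replicate m i ++ l) f = (pderiv1 i)^[m] (dlist l f) := by
  induction m with
  | zero => rfl
  | succ m ih =>
    rw [Function.iterate_succ_apply', ← ih]; rfl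

lemma mderiv_eq_dlist {n : ℕ} (α : Fin n → ℕ) (f : hE n → ℝ) :
    mderiv α f = dlist ((List.finRange n).flatMap fun i => List.replicate (α i) i) f := by
  unfold mderiv
  generalize List.finRange n = L
  induction L with
  | nil => rfl
  | cons a L ih =>
    rw [List.flatMap_cons, dlist_replicate_append, ← ih]; rfl

lemma count_flat {n : ℕ} (α : Fin n → ℕ) (a : Fin n) :
    ((List.finRange n).flatMap fun i => List.replicate (α i) i).count a = α a := by
  rw [List.count_flatMap]
  have : (List.map (List.count a ∘ fun i => List.replicate (α i) i) (List.finRange n)).sum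
      = ∑ i, (List.replicate (α i) i).count a := by
    rw [← List.sum_ofFn, List.ofFn_eq_map]; rfl
  rw [this]
  simp [List.count_replicate]

lemma count_ofFn' {n m : ℕ} (d : Fin m → Fin n) (a : Fin n) :
    (List.ofFn d).count a = (Finset.univ.filter (fun s => d s = a)).card := by
  induction m with
  | zero => simp
  | succ m ih =>
    rw [List.ofFn_succ, List.count_cons, ih, Fin.card_filter_univ_succ]
    simp only [beq_iff_eq]
    split_ifs <;> simp_all

lemma iteratedFDeriv_eq_dlist {n m : ℕ} (d : Fin m → Fin n) {f : hE n → ℝ}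
    (hf : ContDiff ℝ (⊤ : ℕ∞) f) (x : hE n) :
    iteratedFDeriv ℝ m f x (fun s => EuclideanSpace.single (d s) 1) = dlist (List.ofFn d) f x := by
  induction m generalizing x with
  | zero => simp [dlist]
  | succ m ih =>
    rw [iteratedFDeriv_succ_apply_left, List.ofFn_succ]
    change _ = pderiv1 (d 0) (dlist (List.ofFn fun i => d i.succ) f) x
    have : dlist (List.ofFn fun i => d i.succ) f =
      fun x => iteratedFDeriv ℝ m f x (fun s => EuclideanSpace.single (d s.succ) 1) := by
      funext x; rw [ih]
    rw [this]
    unfold pderiv1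
    have hd : DifferentiableAt ℝ (iteratedFDeriv ℝ m f) x :=
      (hf.differentiable_iteratedFDeriv (by exact_mod_cast (ENat.natCast_lt_top m))) x
    have h2 := (hd.hasFDerivAt.continuousMultilinear_apply_const
      (fun s => EuclideanSpace.single (d s.succ) 1)).fderiv
    rw [h2]
    rfl

lemma iteratedFDeriv_eq_mderiv {n m : ℕ} (d : Fin m → Fin n) (β : Fin n → ℕ)
    (hβ : ∀ i, β i = (Finset.univ.filter (fun s => d s = i)).card) {f : hE n → ℝ}
    (hf : ContDiff ℝ (⊤ : ℕ∞) f) (x : hE n) :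
    iteratedFDeriv ℝ m f x (fun s => EuclideanSpace.single (d s) 1) = mderiv β f x := by
  rw [iteratedFDeriv_eq_dlist d hf, mderiv_eq_dlist]
  refine congrFun (dlist_perm ?_ hf) x
  rw [List.perm_iff_count]
  intro a
  rw [count_flat, count_ofFn', hβ]

lemma contDiff_mderiv {n : ℕ} (α : Fin n → ℕ) {f : hE n → ℝ} (hf : ContDiff ℝ (⊤ : ℕ∞) f) :
    ContDiff ℝ (⊤ : ℕ∞) (mderiv α f) := by
  rw [mderiv_eq_dlist]; exact contDiff_dlist _ hf

lemma hasCompactSupport_mderiv {n : ℕ} (α : Fin n → ℕ) {f : hE n → ℝ} (hf : HasCompactSupport f) :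
    HasCompactSupport (mderiv α f) := by
  rw [mderiv_eq_dlist]
  induction ((List.finRange n).flatMap fun i => List.replicate (α i) i) with
  | nil => exact hf
  | cons a l ih => exact ih.fderiv_apply ℝ _

lemma matVec_eq {n : ℕ} (M : Matrix (Fin n) (Fin n) ℝ) (x : hE n) :
    matVec M x = Matrix.toEuclideanCLM (n := Fin n) (𝕜 := ℝ) M x := rfl

lemma matVec_single {n : ℕ} (M : Matrix (Fin n) (Fin n) ℝ) (j : Fin n) :
    matVec M (EuclideanSpace.single j 1) = ∑ i, M i j • EuclideanSpace.single i (1 : ℝ) := by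
  ext i
  simp [matVec, Pi.single_apply]

/-- the multi-index attached to a choice function -/
def bidx {n : ℕ} {α : Fin n → ℕ} (c : (j : Fin n) → Fin (α j) → Fin n) : Fin n → ℕ :=
  fun i => ∑ j, (Finset.univ.filter (fun s => c j s = i)).card

lemma sum_bidx {n : ℕ} {α : Fin n → ℕ} (c : (j : Fin n) → Fin (α j) → Fin n) :
    ∑ i, bidx c i = ∑ i, α i := by
  unfold bidx
  rw [Finset.sum_comm]
  refine Finset.sum_congr rfl fun j _ => ?_
  rw [← Finset.card_eq_sum_card_fiberwise (fun _ _ => Finset.mem_coe.2 (Finset.mem_univ _))]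
  simp

lemma card_sigma_filter {n m : ℕ} {α : Fin n → ℕ} (e : (Σ j, Fin (α j)) ≃ Fin m)
    (r : (Σ j, Fin (α j)) → Fin n) (i : Fin n) :
    (Finset.univ.filter (fun s => r (e.symm s) = i)).card
      = ∑ j, (Finset.univ.filter (fun s => r ⟨j, s⟩ = i)).card := by
  simp only [Finset.card_filter]
  rw [← Fintype.sum_sigma' (fun j s => if r ⟨j, s⟩ = i then 1 else 0)]
  exact Equiv.sum_comp e.symm (fun p => if r p = i then 1 else 0)

lemma mderiv_comp_matVec {n : ℕ} (M : Matrix (Fin n) (Fin n) ℝ) (α : Fin n → ℕ) {ψ : hE n → ℝ}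
    (hψ : ContDiff ℝ (⊤ : ℕ∞) ψ) (x : hE n) :
    mderiv α (fun x => ψ (matVec M x)) x = dirOp M α (fun β => mderiv β ψ) (matVec M x) := by
  let L := Matrix.toEuclideanCLM (n := Fin n) (𝕜 := ℝ) M
  have hL : ∀ x, matVec M x = L x := fun x => rfl
  let e : (Σ j, Fin (α j)) ≃ Fin (∑ j, α j) := finSigmaFinEquiv
  have h1 := iteratedFDeriv_eq_mderiv (fun s => (e.symm s).1) α (f := fun x => ψ (matVec M x))
    (fun i => by
      rw [card_sigma_filter e (fun p => p.1)]
      simp only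
      rw [Finset.sum_eq_single i] <;> simp +contextual)
    (hψ.comp L.contDiff) x
  rw [← h1]
  have h2 := L.iteratedFDeriv_comp_right hψ x (i := ∑ j, α j) (by exact_mod_cast le_top)
  change iteratedFDeriv ℝ _ (ψ ∘ L) x _ = _
  rw [h2, ContinuousMultilinearMap.compContinuousLinearMap_apply]
  have h3 : ∀ s, L (EuclideanSpace.single (e.symm s).1 1) =
      ∑ i, M i (e.symm s).1 • EuclideanSpace.single i (1 : ℝ) := fun s => matVec_single M _
  simp only [h3]
  rw [ContinuousMultilinearMap.map_sum]
  simp only [ContinuousMultilinearMap.map_smul_univ]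
  unfold dirOp
  let E : ((j : Fin n) → Fin (α j) → Fin n) ≃ (Fin (∑ j, α j) → Fin n) :=
    (Equiv.piCurry (fun (_ : Fin n) _ => Fin n)).symm.trans (e.arrowCongr (Equiv.refl _))
  rw [← Equiv.sum_comp E]
  refine Finset.sum_congr rfl fun c _ => ?_
  have hE : ∀ s, E c s = c (e.symm s).1 (e.symm s).2 := fun s => rfl
  rw [iteratedFDeriv_eq_mderiv (E c) (bidx c) ?_ hψ, smul_eq_mul]
  · congr 1
    simp only [hE]
    rw [Equiv.prod_comp e.symm (fun p => M (c p.1 p.2) p.1), Fintype.prod_sigma]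
  · intro i
    simp only [hE]
    rw [card_sigma_filter e (fun p => c p.1 p.2)]
    rfl

lemma map_matVec {n : ℕ} (M : Matrix (Fin n) (Fin n) ℝ) (hM : M.det ≠ 0) :
    Measure.map (matVec M) (volume : Measure (hE n))
      = ENNReal.ofReal |M.det|⁻¹ • (volume : Measure (hE n)) := by
  have hdet : LinearMap.det (Matrix.toEuclideanLin M : hE n →ₗ[ℝ] hE n) = M.det := by
    rw [Matrix.toEuclideanLin_eq_toLin]; exact LinearMap.det_toLin _ _
  have := Measure.map_linearMap_addHaar_eq_smul_addHaar (volume : Measure (hE n))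
    (f := (Matrix.toEuclideanLin M : hE n →ₗ[ℝ] hE n)) (by rw [hdet]; exact hM)
  rw [hdet, abs_inv] at this
  exact this

lemma continuous_matVec {n : ℕ} (M : Matrix (Fin n) (Fin n) ℝ) : Continuous (matVec M) :=
  (Matrix.toEuclideanCLM (n := Fin n) (𝕜 := ℝ) M).continuous

lemma integrable_comp_matVec {n : ℕ} (M : Matrix (Fin n) (Fin n) ℝ) (hM : M.det ≠ 0)
    {g : hE n → ℝ} (hg : Integrable g) : Integrable (fun x => g (matVec M x)) := by
  have h : Integrable g (Measure.map (matVec M) (volume : Measure (hE n))) := by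
    rw [map_matVec M hM]; exact hg.smul_measure ENNReal.ofReal_ne_top
  exact h.comp_measurable (continuous_matVec M).measurable

lemma integral_comp_matVec {n : ℕ} (M : Matrix (Fin n) (Fin n) ℝ) (hM : M.det ≠ 0)
    {g : hE n → ℝ} (hg : AEStronglyMeasurable g) :
    ∫ x, g (matVec M x) = |M.det|⁻¹ * ∫ x, g x := by
  have h : AEStronglyMeasurable g (Measure.map (matVec M) (volume : Measure (hE n))) := by
    rw [map_matVec M hM]; exact hg.smul_measure _
  rw [← integral_map (continuous_matVec M).measurable.aemeasurable h, map_matVec M hM,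
    integral_smul_measure, ENNReal.toReal_ofReal (by positivity), smul_eq_mul]

lemma ae_comp_matVec {n : ℕ} (M : Matrix (Fin n) (Fin n) ℝ) (hM : M.det ≠ 0)
    {p : hE n → Prop} (hp : ∀ᵐ x, p x) : ∀ᵐ x, p (matVec M x) := by
  have h : ∀ᵐ x ∂(Measure.map (matVec M) (volume : Measure (hE n))), p x := by
    rw [map_matVec M hM]; exact Measure.ae_smul_measure hp _
  exact ae_of_ae_map (continuous_matVec M).measurable.aemeasurable h

lemma measurable_joint {n : ℕ} (A : hE n → Matrix (Fin n) (Fin n) ℝ)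
    (hA : ∀ i j, Measurable fun y => A y i j) :
    Measurable (fun p : hE n × hE n => matVec (A p.1) p.2) := by
  unfold matVec
  refine (WithLp.measurable_toLp 2 (Fin n → ℝ)).comp ?_
  refine measurable_pi_lambda _ fun i => ?_
  simp only [Matrix.mulVec, dotProduct]
  refine Finset.measurable_sum _ fun j _ => ?_
  refine ((hA i j).comp measurable_fst).mul ?_
  exact (measurable_pi_apply j).comp ((WithLp.measurable_ofLp 2 (Fin n → ℝ)).comp measurable_snd)

lemma aesm_joint {n : ℕ} (A : hE n → Matrix (Fin n) (Fin n) ℝ)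
    (hA : ∀ i j, Measurable fun y => A y i j) {w : hE n → ℝ} (hw : Measurable w)
    (hinv : ∀ᵐ y, w y ≠ 0 → (A y).det ≠ 0) {g : hE n → ℝ}
    (hg : AEStronglyMeasurable g) :
    AEStronglyMeasurable (fun p : hE n × hE n => w p.1 * g (matVec (A p.1) p.2))
      ((volume : Measure (hE n)).prod volume) := by
  have hJ := measurable_joint A hA
  refine ⟨fun p => w p.1 * hg.mk g (matVec (A p.1) p.2), ?_, ?_⟩
  · exact ((hw.comp measurable_fst).mul
      (hg.stronglyMeasurable_mk.measurable.comp hJ)).stronglyMeasurable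
  · obtain ⟨N, hN, hNm, hN0⟩ := exists_measurable_superset_of_null
      (show volume {x | ¬ g x = hg.mk g x} = 0 from hg.ae_eq_mk)
    let S : Set (hE n × hE n) := {p | w p.1 = 0} ∪ (fun p => matVec (A p.1) p.2) ⁻¹' Nᶜ
    have hS : MeasurableSet S :=
      ((hw.comp measurable_fst) (measurableSet_singleton 0)).union (hJ hNm.compl)
    have hae : ∀ᵐ p ∂((volume : Measure (hE n)).prod volume), p ∈ S := by
      rw [Measure.ae_prod_mem_iff_ae_ae_mem hS]
      filter_upwards [hinv] with y hy
      by_cases h0 : w y = 0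
      · exact Filter.Eventually.of_forall fun x => Or.inl h0
      · have : ∀ᵐ x : hE n, x ∈ Nᶜ := by
          rw [ae_iff]; simpa using hN0
        filter_upwards [ae_comp_matVec (A y) (hy h0) this] with x hx
        exact Or.inr hx
    filter_upwards [hae] with p hp
    rcases hp with hp | hp
    · have : w p.1 = 0 := hp
      simp [this]
    · have : g (matVec (A p.1) p.2) = hg.mk g (matVec (A p.1) p.2) := by
        by_contra hc
        exact hp (hN hc)
      rw [this]

lemma integrable_joint {n : ℕ} (A : hE n → Matrix (Fin n) (Fin n) ℝ)
    (hA : ∀ i j, Measurable fun y => A y i j) {w : hE n → ℝ} (hw : Measurable w)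
    (hinv : ∀ᵐ y, w y ≠ 0 → (A y).det ≠ 0)
    (hint : Integrable fun y => |(A y).det|⁻¹ * |w y|) {g : hE n → ℝ}
    (hg : Integrable g) {ψ : hE n → ℝ} (hψ : Continuous ψ) (hc : HasCompactSupport ψ) :
    Integrable (fun p : hE n × hE n => w p.1 * g (matVec (A p.1) p.2) * ψ p.2)
      ((volume : Measure (hE n)).prod volume) := by
  obtain ⟨C, hC⟩ := hc.exists_bound_of_continuous hψ
  have hbase : Integrable (fun p : hE n × hE n => w p.1 * g (matVec (A p.1) p.2))
      ((volume : Measure (hE n)).prod volume) := by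
    have hm := aesm_joint A hA hw hinv hg.aestronglyMeasurable
    rw [integrable_prod_iff hm]
    constructor
    · filter_upwards [hinv] with y hy
      by_cases h0 : w y = 0
      · simp [h0]
      · exact (integrable_comp_matVec (A y) (hy h0) hg).const_mul _
    · refine (hint.mul_const (∫ x, ‖g x‖)).congr ?_
      filter_upwards [hinv] with y hy
      by_cases h0 : w y = 0
      · simp [h0]
      · simp only [norm_mul]
        rw [integral_const_mul, integral_comp_matVec (A y) (hy h0) (g := fun x => ‖g x‖)
          hg.aestronglyMeasurable.norm, Real.norm_eq_abs]
        ring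
  exact hbase.mul_bdd (c := C) (hψ.comp continuous_snd).aestronglyMeasurable
    (Filter.Eventually.of_forall fun p => hC p.2)

lemma abs_entry_le {n : ℕ} (M : Matrix (Fin n) (Fin n) ℝ) (i j : Fin n) :
    |M i j| ≤ frobNorm M := by
  unfold frobNorm
  apply Real.abs_le_sqrt
  calc M i j ^ 2 ≤ ∑ j, M i j ^ 2 :=
        Finset.single_le_sum (f := fun j => M i j ^ 2) (fun _ _ => sq_nonneg _) (Finset.mem_univ j)
    _ ≤ _ := Finset.single_le_sum (f := fun i => ∑ j, M i j ^ 2)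
        (fun _ _ => Finset.sum_nonneg fun _ _ => sq_nonneg _) (Finset.mem_univ i)

lemma pow_le_one_add {t : ℝ} (ht : 0 ≤ t) {m k : ℕ} (h : m ≤ k) : t ^ m ≤ 1 + t ^ k := by
  rcases le_total t 1 with h1 | h1
  · exact (pow_le_one₀ ht h1).trans (by linarith [pow_nonneg ht k])
  · exact (pow_le_pow_right₀ h1 h).trans (by linarith)

lemma abs_coef_le {n k : ℕ} (M : Matrix (Fin n) (Fin n) ℝ) (α : Fin n → ℕ)
    (hα : ∑ i, α i ≤ k) (c : (j : Fin n) → Fin (α j) → Fin n) :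
    |∏ j, ∏ s, M (c j s) j| ≤ 1 + frobNorm M ^ k := by
  refine le_trans ?_ (pow_le_one_add (Real.sqrt_nonneg _) hα)
  simp only [Finset.abs_prod]
  calc ∏ j, ∏ s, |M (c j s) j| ≤ ∏ j, ∏ _s : Fin (α j), frobNorm M := by
        refine Finset.prod_le_prod (fun _ _ => Finset.prod_nonneg fun _ _ => abs_nonneg _) ?_
        intro j _
        exact Finset.prod_le_prod (fun _ _ => abs_nonneg _) fun s _ => abs_entry_le _ _ _
    _ = frobNorm M ^ ∑ i, α i := by simp [Finset.prod_pow_eq_pow_sum]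

lemma measurable_det {n : ℕ} (A : hE n → Matrix (Fin n) (Fin n) ℝ)
    (hA : ∀ i j, Measurable fun y => A y i j) : Measurable fun y => (A y).det := by
  simp only [Matrix.det_apply']
  exact Finset.measurable_sum _ fun σ _ => (Finset.measurable_prod _ fun i _ => hA _ _).const_mul _

lemma slice_identity {n k : ℕ} (M : Matrix (Fin n) (Fin n) ℝ) (hM : M.det ≠ 0)
    (f : hE n → ℝ) (D : (Fin n → ℕ) → hE n → ℝ) (hf : HasSobolevDerivs k f D)
    (α : Fin n → ℕ) (hα : ∑ i, α i ≤ k) (φ : hE n → ℝ) (hφ : ContDiff ℝ (⊤ : ℕ∞) φ)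
    (hc : HasCompactSupport φ) :
    ∫ x, f (matVec M x) * mderiv α φ x
      = (-1 : ℝ) ^ (∑ i, α i) * ∫ x, dirOp M α D (matVec M x) * φ x := by
  let ψ : hE n → ℝ := fun z => φ (matVec M⁻¹ z)
  have hinv1 : ∀ x, matVec M⁻¹ (matVec M x) = x := by
    intro x
    simp [matVec, Matrix.mulVec_mulVec, Matrix.nonsing_inv_mul _ (isUnit_iff_ne_zero.2 hM)]
  have hinv2 : ∀ x, matVec M (matVec M⁻¹ x) = x := by
    intro x
    simp [matVec, Matrix.mulVec_mulVec, Matrix.mul_nonsing_inv _ (isUnit_iff_ne_zero.2 hM)]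
  have hψ : ContDiff ℝ (⊤ : ℕ∞) ψ :=
    hφ.comp (Matrix.toEuclideanCLM (n := Fin n) (𝕜 := ℝ) M⁻¹).contDiff
  let H : hE n ≃ₜ hE n :=
    { toFun := matVec M⁻¹, invFun := matVec M, left_inv := hinv2, right_inv := hinv1,
      continuous_toFun := continuous_matVec _, continuous_invFun := continuous_matVec _ }
  have hψc : HasCompactSupport ψ := hc.comp_homeomorph H
  have hφψ : φ = fun x => ψ (matVec M x) := by funext x; simp [ψ, hinv1]
  have hfi : ∀ β : Fin n → ℕ, ∑ i, β i ≤ k → Integrable (D β) := fun β hβ => (hf.2 β hβ).1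
  have hf0 : Integrable f := by
    have := hfi 0 (by simp)
    rwa [hf.1] at this
  have hmul : ∀ {g χ : hE n → ℝ}, Integrable g → ContDiff ℝ (⊤ : ℕ∞) χ → HasCompactSupport χ →
      Integrable fun x => g x * χ x := by
    intro g χ hg hχ hχc
    obtain ⟨C, hC⟩ := hχc.exists_bound_of_continuous hχ.continuous
    exact hg.mul_bdd (c := C) hχ.continuous.aestronglyMeasurable (Filter.Eventually.of_forall hC)
  have hb : ∀ c : (j : Fin n) → Fin (α j) → Fin n, ∑ i, bidx c i ≤ k := fun c => by
    rw [sum_bidx]; exact hα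
  -- left side
  have hL : ∀ x, f (matVec M x) * mderiv α φ x
      = (fun z => f z * dirOp M α (fun β => mderiv β ψ) z) (matVec M x) := by
    intro x
    rw [hφψ, mderiv_comp_matVec M α hψ]
  have hR : ∀ x, dirOp M α D (matVec M x) * φ x
      = (fun z => dirOp M α D z * ψ z) (matVec M x) := by
    intro x
    rw [hφψ]
  have e1 : (fun z => f z * dirOp M α (fun β => mderiv β ψ) z) = fun z =>
      ∑ c : (j : Fin n) → Fin (α j) → Fin n,
        (∏ j, ∏ s, M (c j s) j) * (f z * mderiv (bidx c) ψ z) := by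
    funext z
    unfold dirOp
    rw [Finset.mul_sum]
    refine Finset.sum_congr rfl fun c _ => ?_
    change _ * (_ * mderiv (bidx c) ψ z) = _
    ring
  have e2 : (fun z => dirOp M α D z * ψ z) = fun z =>
      ∑ c : (j : Fin n) → Fin (α j) → Fin n,
        (∏ j, ∏ s, M (c j s) j) * (D (bidx c) z * ψ z) := by
    funext z
    unfold dirOp
    rw [Finset.sum_mul]
    refine Finset.sum_congr rfl fun c _ => ?_
    change (_ * D (bidx c) z) * ψ z = _
    ring
  have i1 : ∀ c : (j : Fin n) → Fin (α j) → Fin n, Integrable fun z =>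
      (∏ j, ∏ s, M (c j s) j) * (f z * mderiv (bidx c) ψ z) := fun c =>
    (hmul hf0 (contDiff_mderiv _ hψ) (hasCompactSupport_mderiv _ hψc)).const_mul _
  have i2 : ∀ c : (j : Fin n) → Fin (α j) → Fin n, Integrable fun z =>
      (∏ j, ∏ s, M (c j s) j) * (D (bidx c) z * ψ z) := fun c =>
    (hmul (hfi _ (hb c)) hψ hψc).const_mul _
  have I1 : Integrable (fun z => f z * dirOp M α (fun β => mderiv β ψ) z) := by
    rw [e1]; exact integrable_finsetSum _ fun c _ => i1 c
  have I2 : Integrable (fun z => dirOp M α D z * ψ z) := by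
    rw [e2]; exact integrable_finsetSum _ fun c _ => i2 c
  simp_rw [hL, hR]
  rw [integral_comp_matVec M hM I1.aestronglyMeasurable,
    integral_comp_matVec M hM I2.aestronglyMeasurable, e1, e2,
    integral_finsetSum _ (fun c _ => i1 c), integral_finsetSum _ (fun c _ => i2 c)]
  rw [mul_left_comm]
  congr 1
  rw [Finset.mul_sum]
  refine Finset.sum_congr rfl fun c _ => ?_
  rw [integral_const_mul, integral_const_mul, (hf.2 _ (hb c)).2 ψ hψ hψc, sum_bidx]
  ring

/-- Under the integrability condition, for `f ∈ W^{k,1}` and `|α| ≤ k`, the weak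
derivative of order `α` of `H_{Φ,A} f` is
`x ↦ ∫ Φ(y) [∏_j (Σ_i a_{ij}(y) ∂/∂xᵢ)^{α_j}](f)(A(y)x) dy`. -/
theorem weakDeriv_hausdorffOp (n k : ℕ)
    (Φ : EuclideanSpace ℝ (Fin n) → ℝ)
    (A : EuclideanSpace ℝ (Fin n) → Matrix (Fin n) (Fin n) ℝ)
    (hΦ : Measurable Φ) (hA : ∀ i j, Measurable fun y => A y i j)
    (hinv : ∀ᵐ y : EuclideanSpace ℝ (Fin n), Φ y ≠ 0 → (A y).det ≠ 0)
    (hint : Integrable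
      (fun y => |(A y).det|⁻¹ * (1 + frobNorm (A y) ^ k) * |Φ y|))
    (f : EuclideanSpace ℝ (Fin n) → ℝ)
    (D : (Fin n → ℕ) → EuclideanSpace ℝ (Fin n) → ℝ)
    (hf : HasSobolevDerivs k f D)
    (α : Fin n → ℕ) (hα : ∑ i, α i ≤ k) :
    IsWeakDeriv α (hausdorffOp Φ A f)
      (fun x => ∫ y, Φ y * dirOp (A y) α D (matVec (A y) x)) := by
  intro φ hφ hc
  have hfi : ∀ β : Fin n → ℕ, ∑ i, β i ≤ k → Integrable (D β) := fun β hβ => (hf.2 β hβ).1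
  have hf0 : Integrable f := by
    have := hfi 0 (by simp)
    rwa [hf.1] at this
  have hdet := measurable_det A hA
  have hFn : ∀ y, 0 ≤ frobNorm (A y) ^ k := fun y => pow_nonneg (Real.sqrt_nonneg _) _
  have hΦint : Integrable fun y => |(A y).det|⁻¹ * |Φ y| := by
    refine hint.mono' (by fun_prop) (Filter.Eventually.of_forall fun y => ?_)
    rw [Real.norm_eq_abs, abs_of_nonneg (by positivity), mul_right_comm]
    exact le_mul_of_one_le_right (by positivity) (by linarith [hFn y])
  have J1 := integrable_joint A hA hΦ hinv hΦint hf0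
    (contDiff_mderiv α hφ).continuous (hasCompactSupport_mderiv α hc)
  have J2 : Integrable (fun p : hE n × hE n =>
      Φ p.1 * dirOp (A p.1) α D (matVec (A p.1) p.2) * φ p.2)
      ((volume : Measure (hE n)).prod volume) := by
    have e : (fun p : hE n × hE n => Φ p.1 * dirOp (A p.1) α D (matVec (A p.1) p.2) * φ p.2)
        = fun p => ∑ c : (j : Fin n) → Fin (α j) → Fin n,
          (Φ p.1 * ∏ j, ∏ s, A p.1 (c j s) j) * D (bidx c) (matVec (A p.1) p.2) * φ p.2 := by
      funext p
      unfold dirOp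
      rw [Finset.mul_sum, Finset.sum_mul]
      refine Finset.sum_congr rfl fun c _ => ?_
      rw [← mul_assoc]
      rfl
    rw [e]
    refine integrable_finsetSum _ fun c _ => ?_
    have hmc : Measurable fun y => Φ y * ∏ j, ∏ s, A y (c j s) j :=
      hΦ.mul (Finset.measurable_prod _ fun j _ => Finset.measurable_prod _ fun s _ => hA _ _)
    refine integrable_joint A hA hmc ?_ ?_
      (hfi _ (by rw [sum_bidx]; exact hα)) hφ.continuous hc
    · filter_upwards [hinv] with y hy h
      exact hy (left_ne_zero_of_mul h)
    · refine hint.mono' (by fun_prop) (Filter.Eventually.of_forall fun y => ?_)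
      rw [Real.norm_eq_abs, abs_of_nonneg (by positivity), abs_mul, mul_assoc, mul_comm |Φ y|]
      gcongr
      exact abs_coef_le (A y) α hα c
  have hl : ∀ x, hausdorffOp Φ A f x * mderiv α φ x
      = ∫ y, Φ y * f (matVec (A y) x) * mderiv α φ x := fun x => by
    rw [integral_mul_const]; rfl
  have hr : ∀ x, (∫ y, Φ y * dirOp (A y) α D (matVec (A y) x)) * φ x
      = ∫ y, Φ y * dirOp (A y) α D (matVec (A y) x) * φ x := fun x => by
    rw [integral_mul_const]
  simp_rw [hl, hr]
  rw [← integral_integral_swap (f := fun y x => Φ y * f (matVec (A y) x) * mderiv α φ x) J1,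
    ← integral_integral_swap
      (f := fun y x => Φ y * dirOp (A y) α D (matVec (A y) x) * φ x) J2,
    ← integral_const_mul]
  refine integral_congr_ae ?_
  filter_upwards [hinv] with y hy
  by_cases h0 : Φ y = 0
  · simp [h0]
  · simp only [mul_assoc]
    rw [integral_const_mul, integral_const_mul,
      slice_identity (A y) (hy h0) f D hf α hα φ hφ hc]
    ring

end
end

section
/- Let Φ be a nonnegative measurable function on ℝ^n, let A(y) be a measurable n×n-matrix-valued function with A(y) invertible for a.e. y in the support of Φ, and let f ∈ L^1(ℝ^n) be nonnegative. Then ∫_{ℝ^n} |H_{Φ,A} f(x)| dx = ‖f‖_{L^1} · ∫_{ℝ^n} |det A(y)|^{-1} Φ(y) dy (with the convention that both sides may be +∞). -/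
open MeasureTheory

noncomputable section

theorem measurable_matVec_uncurry {n : ℕ}
    (A : EuclideanSpace ℝ (Fin n) → Matrix (Fin n) (Fin n) ℝ)
    (hA : ∀ i j, Measurable fun y => A y i j) :
    Measurable fun p : EuclideanSpace ℝ (Fin n) × EuclideanSpace ℝ (Fin n) =>
      matVec (A p.2) p.1 := by
  unfold matVec
  refine (WithLp.measurable_toLp 2 (Fin n → ℝ)).comp ?_
  refine measurable_pi_lambda _ fun i => ?_
  simp only [Matrix.mulVec, dotProduct]
  refine Finset.measurable_sum _ fun j _ => ?_
  refine ((hA i j).comp measurable_snd).mul ?_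
  exact (measurable_pi_apply j).comp
    ((WithLp.measurable_ofLp 2 (Fin n → ℝ)).comp measurable_fst)

theorem lintegral_comp_matVec {n : ℕ} (M : Matrix (Fin n) (Fin n) ℝ) (hM : M.det ≠ 0)
    (G : EuclideanSpace ℝ (Fin n) → ENNReal) (hG : Measurable G) :
    ∫⁻ x, G (matVec M x) = ENNReal.ofReal (|M.det|⁻¹) * ∫⁻ x, G x := by
  set L : EuclideanSpace ℝ (Fin n) →ₗ[ℝ] EuclideanSpace ℝ (Fin n) :=
    Matrix.toEuclideanLin M with hL
  have hLM : ∀ x, matVec M x = L x := fun x => rfl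
  have hdet : LinearMap.det L = M.det := by
    rw [hL, Matrix.toEuclideanLin_eq_toLin_orthonormal, LinearMap.det_toLin]
  have hmeas : Measurable L := L.continuous_of_finiteDimensional.measurable
  have hmap := Measure.map_linearMap_addHaar_eq_smul_addHaar
    (volume : Measure (EuclideanSpace ℝ (Fin n))) (f := L) (by rwa [hdet])
  simp only [hLM]
  rw [← lintegral_map hG hmeas, hmap, lintegral_smul_measure, hdet, abs_inv, smul_eq_mul]

theorem lintegral_hausdorff_aux (n : ℕ)
    (Φ : EuclideanSpace ℝ (Fin n) → ℝ)
    (A : EuclideanSpace ℝ (Fin n) → Matrix (Fin n) (Fin n) ℝ)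
    (G : EuclideanSpace ℝ (Fin n) → ENNReal)
    (hΦ : Measurable Φ)
    (hA : ∀ i j, Measurable fun y => A y i j)
    (hinv : ∀ᵐ y : EuclideanSpace ℝ (Fin n), Φ y ≠ 0 → (A y).det ≠ 0)
    (hG : Measurable G) :
    ∫⁻ x, ∫⁻ y, ENNReal.ofReal (Φ y) * G (matVec (A y) x)
      = (∫⁻ x, G x) * ∫⁻ y, ENNReal.ofReal (|(A y).det|⁻¹ * Φ y) := by
  have hm := measurable_matVec_uncurry A hA
  have hdet : Measurable fun y => (A y).det := by
    simp only [Matrix.det_apply]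
    refine Finset.measurable_sum _ fun σ _ => ?_
    exact (Finset.measurable_prod _ fun i _ => hA _ _).const_smul _
  rw [lintegral_lintegral_swap]
  · rw [← lintegral_const_mul]
    · refine lintegral_congr_ae ?_
      filter_upwards [hinv] with y hy
      have hmy : Measurable fun x => G (matVec (A y) x) :=
        hG.comp (hm.comp (measurable_id.prodMk measurable_const))
      rw [lintegral_const_mul _ hmy]
      by_cases h0 : Φ y = 0
      · simp [h0]
      · rw [lintegral_comp_matVec _ (hy h0) G hG, ENNReal.ofReal_mul (by positivity)]
        ring
    · have : Measurable fun y => |(A y).det|⁻¹ := (measurable_abs.comp hdet).inv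
      exact (this.mul hΦ).ennreal_ofReal
  · exact ((hΦ.comp measurable_snd).ennreal_ofReal.mul (hG.comp hm)).aemeasurable

/-- For nonnegative measurable `Φ`, a matrix family `A(y)` invertible a.e. on
`supp Φ`, and nonnegative `f ∈ L¹`, Tonelli's theorem gives
`∫ |H_{Φ,A}f(x)| dx = ‖f‖_{L¹} ∫ |det A(y)|⁻¹ Φ(y) dy`, where both sides may be `+∞`
(the integrals are taken in the unsigned, extended-real sense). -/
theorem lintegral_hausdorffOp_eq (n : ℕ)
    (Φ : EuclideanSpace ℝ (Fin n) → ℝ)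
    (A : EuclideanSpace ℝ (Fin n) → Matrix (Fin n) (Fin n) ℝ)
    (f : EuclideanSpace ℝ (Fin n) → ℝ)
    (hΦ : Measurable Φ) (hΦ0 : ∀ y, 0 ≤ Φ y)
    (hA : ∀ i j, Measurable fun y => A y i j)
    (hinv : ∀ᵐ y : EuclideanSpace ℝ (Fin n), Φ y ≠ 0 → (A y).det ≠ 0)
    (hf : Integrable f) (hf0 : ∀ x, 0 ≤ f x) :
    ∫⁻ x, ∫⁻ y, ENNReal.ofReal (Φ y * f (matVec (A y) x))
      = (∫⁻ x, ENNReal.ofReal (f x)) *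
          ∫⁻ y, ENNReal.ofReal (|(A y).det|⁻¹ * Φ y) := by
  have hF : AEMeasurable (fun x => ENNReal.ofReal (f x)) volume :=
    hf.aestronglyMeasurable.aemeasurable.ennreal_ofReal
  set G := hF.mk _ with hGdef
  have hG : Measurable G := hF.measurable_mk
  have hFG : ∀ᵐ x, ENNReal.ofReal (f x) = G x := hF.ae_eq_mk
  obtain ⟨N, hNsub, hN, hN0⟩ := exists_measurable_superset_of_null (ae_iff.1 hFG)
  have hm := measurable_matVec_uncurry A hA
  have h1 := lintegral_hausdorff_aux n Φ A G hΦ hA hinv hG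
  have hI : Measurable (N.indicator (fun _ => (1 : ENNReal))) := measurable_const.indicator hN
  have h2 := lintegral_hausdorff_aux n Φ A _ hΦ hA hinv hI
  rw [lintegral_indicator_const hN, hN0, mul_zero, zero_mul] at h2
  have hK : Measurable fun p : EuclideanSpace ℝ (Fin n) × EuclideanSpace ℝ (Fin n) =>
      ENNReal.ofReal (Φ p.2) * N.indicator (fun _ => (1 : ENNReal)) (matVec (A p.2) p.1) :=
    (hΦ.comp measurable_snd).ennreal_ofReal.mul (hI.comp hm)
  rw [lintegral_eq_zero_iff hK.lintegral_prod_right'] at h2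
  rw [lintegral_congr_ae hFG, ← h1]
  refine lintegral_congr_ae ?_
  filter_upwards [h2] with x hx
  have hKx : Measurable fun y =>
      ENNReal.ofReal (Φ y) * N.indicator (fun _ => (1 : ENNReal)) (matVec (A y) x) :=
    hK.comp (measurable_const.prodMk measurable_id)
  have hx' := (lintegral_eq_zero_iff hKx).1 hx
  refine lintegral_congr_ae ?_
  filter_upwards [hx'] with y hy
  simp only [Pi.zero_apply, mul_eq_zero] at hy
  rw [ENNReal.ofReal_mul (hΦ0 y)]
  rcases hy with hy | hy
  · rw [hy, zero_mul, zero_mul]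
  · congr 1
    by_contra hne
    have : matVec (A y) x ∈ N := hNsub hne
    simp [this] at hy

end
end

section
/- Let B be an n×n real matrix with nonnegative entries and nonzero columns b⃗_1, …, b⃗_n, and suppose |det B| > η ∏_{j=1}^n ‖b⃗_j‖ for some η > 0, where ‖·‖ is the Euclidean norm. Let Ω = (0,∞)^n and B(0,1) the open Euclidean unit ball of ℝ^n. Then the Lebesgue measure of (B·Ω) ∩ B(0,1) satisfies |(B·Ω) ∩ B(0,1)| > (η/n^n) · |Ω ∩ B(0,1)|, where B·Ω = { Bx : x ∈ Ω }. -/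
open MeasureTheory

noncomputable section

/-- Let `B` be an `n × n` matrix with nonnegative entries and nonzero columns,
with `|det B| > η ∏_j ‖b⃗_j‖` for some `η > 0`.  Then, with `Ω = (0,∞)ⁿ` and `B(0,1)` the open
unit ball, `|(B·Ω) ∩ B(0,1)| > (η/nⁿ) |Ω ∩ B(0,1)|`. -/
theorem measure_image_orthant_inter_ball (n : ℕ)
    (B : Matrix (Fin n) (Fin n) ℝ) (η : ℝ) (hη : 0 < η)
    (hpos : ∀ i j, 0 ≤ B i j)
    (hcol : ∀ j, (fun i => B i j) ≠ (0 : Fin n → ℝ))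
    (hdet : η * ∏ j, Real.sqrt (∑ i, (B i j) ^ 2) < |B.det|) :
    ENNReal.ofReal (η / n ^ n) *
        volume ({x : EuclideanSpace ℝ (Fin n) | ∀ i, 0 < x i}
          ∩ Metric.ball (0 : EuclideanSpace ℝ (Fin n)) 1) <
      volume ((matVec B '' {x : EuclideanSpace ℝ (Fin n) | ∀ i, 0 < x i})
        ∩ Metric.ball (0 : EuclideanSpace ℝ (Fin n)) 1) := by
  classical
  set S : Set (EuclideanSpace ℝ (Fin n)) := {x : EuclideanSpace ℝ (Fin n) | ∀ i, 0 < x i}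
          ∩ Metric.ball (0 : EuclideanSpace ℝ (Fin n)) 1 with hS
  let c : Fin n → EuclideanSpace ℝ (Fin n) := fun j => WithLp.toLp 2 (fun i => B i j)
  have hcn : ∀ j, ‖c j‖ = Real.sqrt (∑ i, (B i j) ^ 2) := by
    intro j
    simp [c, EuclideanSpace.norm_eq]
  have hc0 : ∀ j, 0 < ‖c j‖ := by
    intro j
    rw [norm_pos_iff]
    intro h
    apply hcol j
    funext i
    have := congrArg (fun v : EuclideanSpace ℝ (Fin n) => v i) h
    simpa [c] using this
  let d : Fin n → ℝ := fun j => 1 / (n * ‖c j‖)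
  let M : Matrix (Fin n) (Fin n) ℝ := B * Matrix.diagonal d
  let L : EuclideanSpace ℝ (Fin n) →ₗ[ℝ] EuclideanSpace ℝ (Fin n) := Matrix.toLpLin 2 2 M
  have hn : ∀ j : Fin n, (0 : ℝ) < n := fun j => by exact_mod_cast j.pos
  have hd : ∀ j, 0 < d j := fun j => by
    have h1 := hc0 j
    have h2 := hn j
    positivity
  have hLdet : LinearMap.det L = M.det := by
    simp only [L, Matrix.toLpLin_eq_toLin, LinearMap.det_toLin]
  have hLx : ∀ x, L x = ∑ j, (d j * x j) • c j := by
    intro x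
    ext i
    simp [L, M, c, Matrix.toLpLin_apply, Matrix.mulVec, dotProduct]
    refine Finset.sum_congr rfl fun j _ => by ring
  have hsub : L '' S ⊆ (matVec B '' {x : EuclideanSpace ℝ (Fin n) | ∀ i, 0 < x i})
        ∩ Metric.ball (0 : EuclideanSpace ℝ (Fin n)) 1 := by
    rintro _ ⟨x, ⟨hx, hxb⟩, rfl⟩
    simp only [Set.mem_setOf_eq] at hx
    rw [mem_ball_zero_iff] at hxb
    refine ⟨⟨WithLp.toLp 2 (fun j => d j * x j), fun i => ?_, ?_⟩, ?_⟩
    · exact mul_pos (hd i) (hx i)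
    · rw [hLx]
      ext i
      simp [matVec, c, Matrix.mulVec, dotProduct]
      refine Finset.sum_congr rfl fun j _ => by ring
    · rw [mem_ball_zero_iff, hLx]
      rcases Nat.eq_zero_or_pos n with h0 | h0
      · subst h0
        simp
      have h0' : (0 : ℝ) < n := by exact_mod_cast h0
      calc ‖∑ j, (d j * x j) • c j‖ ≤ ∑ j, ‖(d j * x j) • c j‖ := norm_sum_le _ _
        _ ≤ ∑ j : Fin n, ‖x‖ / n := by
          refine Finset.sum_le_sum fun j _ => ?_
          rw [norm_smul, norm_mul, Real.norm_of_nonneg (hd j).le]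
          have h1 := hc0 j
          have h2 : ‖x j‖ ≤ ‖x‖ := PiLp.norm_apply_le x j
          have : d j * ‖x j‖ * ‖c j‖ = ‖x j‖ / n := by
            simp only [d]
            field_simp
          rw [this]
          gcongr
        _ = ‖x‖ := by
          simp
          field_simp
        _ < 1 := hxb
  have hopen : IsOpen S := by
    refine IsOpen.inter ?_ Metric.isOpen_ball
    simp only [Set.setOf_forall]
    refine isOpen_iInter_of_finite fun i => ?_
    exact isOpen_lt continuous_const (by fun_prop)
  have hne : S.Nonempty := by
    refine ⟨WithLp.toLp 2 (fun _ => 1 / ((n : ℝ) + 1)), fun i => ?_, ?_⟩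
    · simp only
      positivity
    · rw [mem_ball_zero_iff, EuclideanSpace.norm_eq, Real.sqrt_lt' one_pos]
      simp
      rw [← div_eq_mul_inv, div_lt_one (by positivity)]
      nlinarith [(Nat.cast_nonneg n : (0 : ℝ) ≤ n)]
  have hS0 : volume S ≠ 0 := (hopen.measure_pos volume hne).ne'
  have hST : volume S ≠ ⊤ :=
    ((measure_mono Set.inter_subset_right).trans_lt measure_ball_lt_top).ne
  refine lt_of_lt_of_le ?_ (measure_mono hsub)
  rw [Measure.addHaar_image_linearMap, hLdet]
  refine ENNReal.mul_lt_mul_left hS0 hST ?_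
  have hP : 0 < ∏ j, ‖c j‖ := Finset.prod_pos fun j _ => hc0 j
  have hnn : (0 : ℝ) < (n : ℝ) ^ n := by
    rcases Nat.eq_zero_or_pos n with h0 | h0
    · subst h0
      simp
    · positivity
  have hM : |M.det| = |B.det| / (n ^ n * ∏ j, ‖c j‖) := by
    simp only [M, Matrix.det_mul, Matrix.det_diagonal, abs_mul]
    rw [abs_of_pos (Finset.prod_pos fun j _ => hd j)]
    simp only [d, Finset.prod_div_distrib, Finset.prod_mul_distrib]
    simp [div_eq_mul_inv]
  simp only [← hcn] at hdet
  have hlt : η / n ^ n < |M.det| := by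
    rw [hM, lt_div_iff₀ (by positivity)]
    calc η / n ^ n * (n ^ n * ∏ j, ‖c j‖) = η * ∏ j, ‖c j‖ := by field_simp
      _ < _ := hdet
  exact (ENNReal.ofReal_lt_ofReal_iff ((by positivity : 0 < η / (n : ℝ) ^ n).trans hlt)).2 hlt

end
end

section
/- For every integer k ≥ 0, the Hardy operator H, defined by Hf(x) = (1/x) ∫_0^x f(t) dt for x ≠ 0, is not bounded on the Sobolev space W^{k,1}(ℝ): there exists f ∈ W^{k,1}(ℝ) such that Hf ∉ W^{k,1}(ℝ). In particular (the case k = 0), there exists f ∈ L^1(ℝ) with Hf ∉ L^1(ℝ). -/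
open MeasureTheory

noncomputable section

/-- `g` is the `m`-th weak derivative of `f` on `ℝ`:
`∫ f φ^{(m)} = (−1)^m ∫ g φ` for all test functions `φ ∈ C_c^∞(ℝ)`. -/
def IsWeakDerivR (m : ℕ) (f g : ℝ → ℝ) : Prop :=
  ∀ φ : ℝ → ℝ, ContDiff ℝ (⊤ : ℕ∞) φ → HasCompactSupport φ →
    ∫ x, f x * iteratedDeriv m φ x = (-1 : ℝ) ^ m * ∫ x, g x * φ x

/-- `f ∈ W^{k,1}(ℝ)`: `f` and all its weak derivatives up to order `k` exist and are in `L¹`. -/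
def MemW1 (k : ℕ) (f : ℝ → ℝ) : Prop :=
  ∃ D : ℕ → ℝ → ℝ, D 0 = f ∧
    ∀ m : ℕ, m ≤ k → Integrable (D m) ∧ IsWeakDerivR m f (D m)

/-- The Hardy operator `Hf(x) = x⁻¹ ∫₀ˣ f(t) dt`. -/
def hardyOp (f : ℝ → ℝ) : ℝ → ℝ := fun x => x⁻¹ * ∫ t in (0 : ℝ)..x, f t

lemma smooth_iter {f : ℝ → ℝ} (hf : ContDiff ℝ (⊤ : ℕ∞) f) (m : ℕ) :
    ContDiff ℝ (⊤ : ℕ∞) (iteratedDeriv m f) := by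
  induction m with
  | zero => simpa using hf
  | succ n ih =>
    rw [iteratedDeriv_succ]
    exact (contDiff_infty_iff_deriv.1 ih).2

lemma supp_iter {f : ℝ → ℝ} (hf : HasCompactSupport f) (m : ℕ) :
    HasCompactSupport (iteratedDeriv m f) := by
  induction m with
  | zero => simpa using hf
  | succ n ih =>
    rw [iteratedDeriv_succ]
    exact ih.deriv

lemma weak_iter {f : ℝ → ℝ} (hf : ContDiff ℝ (⊤ : ℕ∞) f) (hs : HasCompactSupport f) (m : ℕ) :
    IsWeakDerivR m f (iteratedDeriv m f) := by
  induction m with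
  | zero => intro φ _ _; simp
  | succ n ih =>
    intro φ hφ hφs
    have hd := (contDiff_infty_iff_deriv.1 hφ)
    have hg := smooth_iter hf n
    have hgs := supp_iter hs n
    have hgd := (contDiff_infty_iff_deriv.1 hg)
    rw [iteratedDeriv_succ', ih (deriv φ) hd.2 hφs.deriv, iteratedDeriv_succ]
    rw [integral_mul_deriv_eq_deriv_mul_of_integrable (u := iteratedDeriv n f)
      (u' := deriv (iteratedDeriv n f)) (v := φ) (v' := deriv φ)]
    · rw [pow_succ]; ring
    · exact fun x _ => (hgd.1 x).hasDerivAt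
    · exact fun x _ => (hd.1 x).hasDerivAt
    · exact (hg.continuous.mul hd.2.continuous).integrable_of_hasCompactSupport hgs.mul_right
    · exact (hgd.2.continuous.mul hφ.continuous).integrable_of_hasCompactSupport hgs.deriv.mul_right
    · exact (hg.continuous.mul hφ.continuous).integrable_of_hasCompactSupport hgs.mul_right

/-- For every integer `k ≥ 0`, the Hardy operator is not bounded on
`W^{k,1}(ℝ)`: there is `f ∈ W^{k,1}(ℝ)` with `Hf ∉ W^{k,1}(ℝ)`.  (For `k = 0`,
`W^{0,1}(ℝ) = L¹(ℝ)`, so in particular there is `f ∈ L¹` with `Hf ∉ L¹`.) -/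
theorem hardyOp_not_bounded_sobolev (k : ℕ) :
    ∃ f : ℝ → ℝ, MemW1 k f ∧ ¬ MemW1 k (hardyOp f) := by
  let b : ContDiffBump (0 : ℝ) := ⟨1, 2, by norm_num, by norm_num⟩
  have hb : ContDiff ℝ (⊤ : ℕ∞) (b : ℝ → ℝ) := b.contDiff
  have hs : HasCompactSupport (b : ℝ → ℝ) := b.hasCompactSupport
  refine ⟨b, ⟨fun m => iteratedDeriv m b, by simp, fun m _ => ⟨?_, weak_iter hb hs m⟩⟩, ?_⟩
  · exact (smooth_iter hb m).continuous.integrable_of_hasCompactSupport (supp_iter hs m)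
  · rintro ⟨D, hD, h⟩
    have hi := (h 0 (Nat.zero_le k)).1
    rw [hD] at hi
    apply not_integrableOn_Ici_inv (a := (1 : ℝ))
    refine (hi.integrableOn (s := Set.Ici 1)).mono' (by fun_prop) ?_
    filter_upwards [ae_restrict_mem measurableSet_Ici] with x hx
    have hx1 : (1 : ℝ) ≤ x := hx
    have hii : ∀ u v : ℝ, IntervalIntegrable (b : ℝ → ℝ) volume u v :=
      fun u v => hb.continuous.intervalIntegrable u v
    have h1 : ∫ t in (0 : ℝ)..1, b t = 1 := by
      rw [intervalIntegral.integral_congr (g := fun _ => (1 : ℝ))]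
      · simp
      · intro t ht
        rw [Set.uIcc_of_le zero_le_one] at ht
        apply b.one_of_mem_closedBall
        simp only [Metric.mem_closedBall, dist_zero_right, Real.norm_eq_abs, b]
        rw [abs_of_nonneg ht.1]
        exact ht.2
    have h2 : 0 ≤ ∫ t in (1 : ℝ)..x, b t :=
      intervalIntegral.integral_nonneg hx1 fun t _ => b.nonneg
    have h3 := intervalIntegral.integral_add_adjacent_intervals (hii 0 1) (hii 1 x)
    have hxi : 0 < x⁻¹ := by positivity
    rw [Real.norm_eq_abs, abs_of_pos hxi]
    unfold hardyOp
    rw [← h3, h1]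
    nlinarith [mul_nonneg hxi.le h2]

end
end

section
/- For every integer k ≥ 1, the adjoint Hardy operator H*, defined by H*f(x) = ∫_0^1 f(x/t) t^{-1} dt (which for x > 0 equals ∫_x^∞ f(s) s^{-1} ds), is not bounded on the Sobolev space W^{k,1}(ℝ): there exists f ∈ W^{k,1}(ℝ) such that H*f ∉ W^{k,1}(ℝ). -/
open MeasureTheory

noncomputable section

/-- The adjoint Hardy operator `H*f(x) = ∫₀¹ f(x/t) t⁻¹ dt`. -/
def adjHardyOp (f : ℝ → ℝ) : ℝ → ℝ := fun x => ∫ t in (0 : ℝ)..1, f (x / t) / t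


lemma weakDeriv_smooth (m : ℕ) : ∀ f : ℝ → ℝ, ContDiff ℝ (⊤ : ℕ∞) f → HasCompactSupport f →
    Continuous (iteratedDeriv m f) ∧ HasCompactSupport (iteratedDeriv m f) ∧
      IsWeakDerivR m f (iteratedDeriv m f) := by
  induction m with
  | zero =>
    intro f hf hc
    refine ⟨by simpa using hf.continuous, by simpa using hc, ?_⟩
    intro φ _ _
    simp
  | succ m ih =>
    intro f hf hc
    have hf' : ContDiff ℝ (⊤ : ℕ∞) (deriv f) := (contDiff_infty_iff_deriv.1 hf).2
    have hc' : HasCompactSupport (deriv f) := hc.deriv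
    obtain ⟨h1, h2, h3⟩ := ih (deriv f) hf' hc'
    rw [iteratedDeriv_succ']
    refine ⟨h1, h2, ?_⟩
    intro φ hφ hφc
    have h4 := h3 φ hφ hφc
    have hd : Differentiable ℝ (iteratedDeriv m φ) :=
      hφ.differentiable_iteratedDeriv m (by exact_mod_cast WithTop.coe_lt_top _)
    have hcd : Continuous (iteratedDeriv (m+1) φ) :=
      hφ.continuous_iteratedDeriv (m+1) (by exact_mod_cast le_top)
    have hcd0 : Continuous (iteratedDeriv m φ) := hd.continuous
    have hfd : Differentiable ℝ f := hf.differentiable (by simp)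
    have key := integral_mul_deriv_eq_deriv_mul_of_integrable (u := f) (u' := deriv f)
      (v := iteratedDeriv m φ) (v' := iteratedDeriv (m+1) φ)
      (fun x _ => (hfd x).hasDerivAt)
      (fun x _ => by rw [iteratedDeriv_succ]; exact (hd x).hasDerivAt)
      ((hf.continuous.mul hcd).integrable_of_hasCompactSupport hc.mul_right)
      ((hf'.continuous.mul hcd0).integrable_of_hasCompactSupport hc'.mul_right)
      ((hf.continuous.mul hcd0).integrable_of_hasCompactSupport hc.mul_right)
    rw [key, h4, pow_succ]
    ring

lemma adjHardy_near_zero (f : ℝ → ℝ) (hf : Continuous f) (h1 : ∀ x, 0 ≤ x → x ≤ 1 → f x = 1)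
    (h2 : ∀ x, 2 ≤ x → f x = 0) (x : ℝ) (hx : 0 < x) (hx1 : x < 1) :
    adjHardyOp f x = (∫ t in (0:ℝ)..1, f (1 / t) / t) - Real.log x := by
  have hcont : ∀ a b : ℝ, 0 < a → 0 < b →
      IntervalIntegrable (fun t => f (x / t) / t) volume a b := by
    intro a b ha hb
    apply ContinuousOn.intervalIntegrable
    have hne : ∀ t ∈ Set.uIcc a b, t ≠ 0 := by
      intro t ht
      have := (lt_min ha hb).trans_le ht.1
      exact this.ne'
    exact (hf.comp_continuousOn (continuousOn_const.div continuousOn_id hne)).div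
      continuousOn_id hne
  have hz : IntervalIntegrable (fun t => f (x / t) / t) volume 0 (x/2) := by
    rw [intervalIntegrable_congr (g := fun _ => (0:ℝ))]
    · simp
    · intro t ht
      rw [Set.uIoc_of_le (by positivity)] at ht
      have : f (x / t) = 0 := by
        apply h2
        rw [le_div_iff₀ ht.1]
        linarith [ht.2]
      simp [this]
  have hA : IntervalIntegrable (fun t => f (x / t) / t) volume 0 x :=
    hz.trans (hcont _ _ (by positivity) hx)
  have hB := hcont x 1 hx one_pos
  unfold adjHardyOp
  rw [← intervalIntegral.integral_add_adjacent_intervals hA hB]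
  have e2 : ∫ t in x..1, f (x / t) / t = - Real.log x := by
    have : ∫ t in x..1, f (x / t) / t = ∫ t in x..1, 1 / t := by
      apply intervalIntegral.integral_congr
      intro t ht
      rw [Set.uIcc_of_le hx1.le] at ht
      have ht0 : 0 < t := hx.trans_le ht.1
      have := h1 (x / t) (by positivity) (by rw [div_le_one ht0]; exact ht.1)
      simp [this]
    rw [this, integral_one_div_of_pos hx one_pos]
    simp
  have e1 : ∫ t in (0:ℝ)..x, f (x / t) / t = ∫ t in (0:ℝ)..1, f (1 / t) / t := by
    have := intervalIntegral.mul_integral_comp_mul_left (a := 0) (b := 1)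
      (f := fun t => f (x / t) / t) x
    simp only [mul_zero, mul_one] at this
    rw [← this, ← intervalIntegral.integral_const_mul]
    apply intervalIntegral.integral_congr
    intro t _
    have hx0 := hx.ne'
    rcases eq_or_ne t 0 with rfl | ht
    · simp
    · have : x / (x * t) = 1 / t := by field_simp
      simp only [this]
      field_simp
  rw [e1, e2]
  ring

lemma not_memW1_of_log (k : ℕ) (hk : 1 ≤ k) (u : ℝ → ℝ) (C : ℝ)
    (hu : ∀ x, 0 < x → x < 1 → u x = C - Real.log x) : ¬ MemW1 k u := by
  rintro ⟨D, -, hD⟩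
  obtain ⟨hg, hw⟩ := hD 1 hk
  set g := D 1
  let B : ContDiffBump (3/2 : ℝ) := ⟨1/4, 1/2, by norm_num, by norm_num⟩
  let φ : ℝ → ℝ := B
  have hφs : ContDiff ℝ (⊤ : ℕ∞) φ := B.contDiff
  have hφc : HasCompactSupport φ := B.hasCompactSupport
  have hφ0 : ∀ y, y ∉ Set.Ioo (1:ℝ) 2 → φ y = 0 := by
    intro y hy
    have : y ∉ Function.support φ := by
      rw [B.support_eq, Real.ball_eq_Ioo]
      convert hy using 3 <;> norm_num [B]
    simpa using this
  have hderiv0 : ∀ y, y ∉ Set.Icc (1:ℝ) 2 → deriv φ y = 0 := by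
    intro y hy
    have : y ∉ Function.support (deriv φ) := by
      intro h
      have h := support_deriv_subset h
      rw [B.tsupport_eq, Real.closedBall_eq_Icc] at h
      apply hy
      convert h using 2 <;> norm_num [B]
    simpa using this
  have hφpos : ∀ y ∈ Set.Ioo (1:ℝ) 2, 0 < φ y := by
    intro y hy
    apply B.pos_of_mem_ball
    rw [Real.ball_eq_Ioo]
    convert hy using 2 <;> norm_num [B]
  have hφle : ∀ y, |φ y| ≤ 1 := fun y => by
    rw [abs_of_nonneg B.nonneg]; exact B.le_one
  have hd : Differentiable ℝ φ := hφs.differentiable (by simp)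
  have hd' : Continuous (deriv φ) := (contDiff_infty_iff_deriv.1 hφs).2.continuous
  have hφy : IntervalIntegrable (fun y => φ y / y) volume 1 2 := by
    apply ContinuousOn.intervalIntegrable
    apply hφs.continuous.continuousOn.div continuousOn_id
    intro y hy
    rw [Set.uIcc_of_le (by norm_num)] at hy
    have : (0:ℝ) < y := by linarith [hy.1]
    exact this.ne'
  have hc : 0 < ∫ y in (1:ℝ)..2, φ y / y := by
    apply intervalIntegral.intervalIntegral_pos_of_pos_on hφy _ (by norm_num)
    intro y hy
    exact div_pos (hφpos y hy) (by linarith [hy.1])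
  have hparts : ∀ K : ℝ, ∫ y in (1:ℝ)..2, (K - Real.log y) * deriv φ y
      = ∫ y in (1:ℝ)..2, φ y / y := by
    intro K
    have hne : ∀ y ∈ Set.uIcc (1:ℝ) 2, y ≠ 0 := by
      intro y hy
      rw [Set.uIcc_of_le (by norm_num)] at hy
      have : (0:ℝ) < y := by linarith [hy.1]
      exact this.ne'
    rw [intervalIntegral.integral_mul_deriv_eq_deriv_mul (u' := fun y => - y⁻¹)
      (fun y hy => (Real.hasDerivAt_log (hne y hy)).const_sub K)
      (fun y _ => (hd y).hasDerivAt)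
      (ContinuousOn.intervalIntegrable (continuousOn_id.inv₀ hne).neg)
      (hd'.intervalIntegrable _ _)]
    rw [hφ0 1 (by simp), hφ0 2 (by simp)]
    simp only [mul_zero, sub_zero, zero_sub, ← intervalIntegral.integral_neg]
    apply intervalIntegral.integral_congr
    intro y _
    simp only
    ring
  have hscale : ∀ n : ℕ, 3 ≤ n → ∫ x, g x * φ (n * x) = - ∫ y in (1:ℝ)..2, φ y / y := by
    intro n hn
    have hn' : (3:ℝ) ≤ n := by exact_mod_cast hn
    have hn0 : (0:ℝ) < n := by linarith
    have h := hw (fun x => φ (n * x)) (hφs.comp (contDiff_const.mul contDiff_id))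
      (hφc.comp_homeomorph (Homeomorph.mulLeft₀ (n:ℝ) hn0.ne'))
    have e : ∫ x, u x * iteratedDeriv 1 (fun x => φ (n * x)) x
        = ∫ y in (1:ℝ)..2, φ y / y := by
      rw [← hparts (C + Real.log n)]
      have e1 : ∀ x, iteratedDeriv 1 (fun x => φ (n * x)) x = n * deriv φ (n * x) := by
        intro x
        rw [iteratedDeriv_one]
        have := ((hd (n * x)).hasDerivAt).comp x ((hasDerivAt_id x).const_mul (n:ℝ))
        rw [mul_comm]
        simpa [Function.comp_def] using this.deriv
      let F : ℝ → ℝ := fun y => (C + Real.log n - Real.log y) * deriv φ y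
      have e2 : ∀ x, u x * iteratedDeriv 1 (fun x => φ (n * x)) x = n * F (n * x) := by
        intro x
        rw [e1]
        by_cases hx : n * x ∈ Set.Icc (1:ℝ) 2
        · have hx0 : 0 < x := by
            by_contra hneg
            push Not at hneg
            nlinarith [hx.1]
          have hx1 : x < 1 := by
            by_contra hneg
            push Not at hneg
            nlinarith [hx.2]
          simp only [F]
          rw [hu x hx0 hx1, Real.log_mul hn0.ne' hx0.ne']
          ring
        · simp [F, hderiv0 _ hx]
      simp_rw [e2]
      rw [integral_const_mul, Measure.integral_comp_mul_left F (n:ℝ), abs_of_pos (by positivity),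
        smul_eq_mul, ← mul_assoc, mul_inv_cancel₀ hn0.ne', one_mul,
        intervalIntegral.integral_of_le (by norm_num), ← integral_Icc_eq_integral_Ioc]
      symm
      apply setIntegral_eq_integral_of_forall_compl_eq_zero
      intro y hy
      simp [F, hderiv0 y hy]
    rw [e] at h
    rw [h]
    ring
  have hlim : Filter.Tendsto (fun n : ℕ => ∫ x, g x * φ (n * x)) Filter.atTop
      (nhds (∫ _ : ℝ, (0:ℝ))) := by
    apply tendsto_integral_of_dominated_convergence (fun x => ‖g x‖)
    · intro n
      exact hg.aestronglyMeasurable.mul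
        (hφs.continuous.comp (continuous_const.mul continuous_id)).aestronglyMeasurable
    · exact hg.norm
    · intro n
      refine Filter.Eventually.of_forall fun x => ?_
      rw [norm_mul]
      exact mul_le_of_le_one_right (norm_nonneg _) (hφle _)
    · refine Filter.Eventually.of_forall fun x => ?_
      apply tendsto_const_nhds.congr'
      rcases le_or_gt x 0 with hx | hx
      · refine Filter.Eventually.of_forall fun n => ?_
        beta_reduce
        rw [hφ0 _ (fun h => ?_), mul_zero]
        have : (n:ℝ) * x ≤ 0 := mul_nonpos_of_nonneg_of_nonpos (Nat.cast_nonneg n) hx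
        linarith [h.1]
      · obtain ⟨N, hN⟩ := exists_nat_ge (2 / x)
        filter_upwards [Filter.eventually_ge_atTop N] with n hn
        beta_reduce
        rw [hφ0 _ (fun h => ?_), mul_zero]
        have h3 : 2 / x ≤ n := hN.trans (by exact_mod_cast hn)
        rw [div_le_iff₀ hx] at h3
        linarith [h.2]
  have hlim2 : Filter.Tendsto (fun n : ℕ => ∫ x, g x * φ (n * x)) Filter.atTop
      (nhds (- ∫ y in (1:ℝ)..2, φ y / y)) := by
    apply tendsto_const_nhds.congr'
    filter_upwards [Filter.eventually_ge_atTop 3] with n hn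
    exact (hscale n hn).symm
  have := tendsto_nhds_unique hlim hlim2
  simp only [integral_zero] at this
  linarith

/-- For every integer `k ≥ 1`, the adjoint Hardy operator is not bounded on
`W^{k,1}(ℝ)`: there is `f ∈ W^{k,1}(ℝ)` with `H*f ∉ W^{k,1}(ℝ)`. -/
theorem adjHardyOp_not_bounded_sobolev (k : ℕ) (hk : 1 ≤ k) :
    ∃ f : ℝ → ℝ, MemW1 k f ∧ ¬ MemW1 k (adjHardyOp f) := by
  let B : ContDiffBump (0 : ℝ) := ⟨1, 2, by norm_num, by norm_num⟩
  have hs : ContDiff ℝ (⊤ : ℕ∞) (B : ℝ → ℝ) := B.contDiff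
  refine ⟨B, ⟨fun m => iteratedDeriv m B, by simp, fun m _ => ?_⟩, ?_⟩
  · obtain ⟨h1, h2, h3⟩ := weakDeriv_smooth m B hs B.hasCompactSupport
    exact ⟨h1.integrable_of_hasCompactSupport h2, h3⟩
  · refine not_memW1_of_log k hk _ _ (fun x hx hx1 =>
      adjHardy_near_zero B hs.continuous ?_ ?_ x hx hx1)
    · intro y hy0 hy1
      apply B.one_of_mem_closedBall
      simp [B, abs_of_nonneg hy0, hy1]
    · intro y hy
      apply B.zero_of_le_dist
      simp only [B, dist_zero_right, Real.norm_eq_abs]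
      exact hy.trans (le_abs_self y)

end
end
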